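/- arXiv:1612.03427 — 5 statements merged into one kernel-verified Lean document; each statement's English description precedes it below -/
import Mathlib

section
/- Let E be an entanglement monotone and S_d(ρ_A) = max E(ρ) over all states ρ of composite systems AB with reduced density operator ρ_A on the d-level system A. Then (i) S_d(U ρ_A U†) = S_d(ρ_A) for every unitary operator U on A, and (ii) the expansibility property holds: S_{d+1}(Σ_{i=1}^{d} p_i |ĩ⟩⟨ĩ|) = S_d(Σ_{i=1}^{d} p_i |i⟩⟨i|), where {|i⟩}_{i=1}^{d} and {|ĩ⟩}_{i=1}^{d+1} are orthonormal bases of the respective Hilbert spaces and the p_i are probabilities with Σ_{i=1}^{d} p_i = 1. -/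
/-!
An isometry `V` on A has a local left inverse: the compression `V†` completed to a Kraus family.
A state of A'B with marginal `V σ V†` is supported on `range V ⊗ B`, because its compression to
the complement is positive with zero trace; the additional Kraus operators therefore annihilate
it. So `V` and its inverse set up a bijection between the states with marginal `σ` and those with
marginal `V σ V†`, and monotonicity in both directions shows that `E` is preserved. Hence
`Sloc` is invariant under isometries of A (`Sloc_isometry`). A unitary is an isometry,
and so is the operator `∑ᵢ |wᵢ⟩⟨vᵢ|` sending one orthonormal family to the other, which gives
expansibility.
-/

open Matrix
open scoped ComplexOrder Kronecker Classical

noncomputable section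

/-- A density matrix: positive semidefinite with unit trace. -/
def IsDensityMatrix {n : Type} [Fintype n] (ρ : Matrix n n ℂ) : Prop :=
  ρ.PosSemidef ∧ ρ.trace = 1

/-- An orthonormal family of vectors. -/
def OrthonormalFamily {ι n : Type} [Fintype n] (v : ι → n → ℂ) : Prop :=
  ∀ i j, star (v i) ⬝ᵥ v j = if i = j then 1 else 0

/-- The rank-one projector `|ψ⟩⟨ψ|`. -/
def pureState {n : Type} (ψ : n → ℂ) : Matrix n n ℂ :=
  Matrix.vecMulVec ψ (star ψ)

def IsPureState {n : Type} [Fintype n] (ρ : Matrix n n ℂ) : Prop :=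
  ∃ ψ : n → ℂ, star ψ ⬝ᵥ ψ = 1 ∧ ρ = pureState ψ

/-- Partial trace over the second (B) factor. -/
def ptraceB {nA nB : Type} [Fintype nB] (ρ : Matrix (nA × nB) (nA × nB) ℂ) :
    Matrix nA nA ℂ :=
  Matrix.of fun i j => ∑ b, ρ (i, b) (j, b)

/-- Partial trace over the first (A) factor. -/
def ptraceA {nA nB : Type} [Fintype nA] (ρ : Matrix (nA × nB) (nA × nB) ℂ) :
    Matrix nB nB ℂ :=
  Matrix.of fun i j => ∑ a, ρ (a, i) (a, j)

/-- The multiset of eigenvalues of a Hermitian matrix. -/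
def eigMultiset {n : Type} [Fintype n] [DecidableEq n] {ρ : Matrix n n ℂ}
    (h : ρ.IsHermitian) : Multiset ℝ :=
  Finset.univ.val.map h.eigenvalues

/-- Eigenvalues in decreasing order, as a list. -/
def eigListDesc {n : Type} [Fintype n] [DecidableEq n] {ρ : Matrix n n ℂ}
    (h : ρ.IsHermitian) : List ℝ :=
  ((eigMultiset h).sort (· ≤ ·)).reverse

/-- Nonzero eigenvalues in decreasing order, as a list. -/
def nonzeroEigListDesc {n : Type} [Fintype n] [DecidableEq n] {ρ : Matrix n n ℂ}
    (h : ρ.IsHermitian) : List ℝ :=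
  (eigListDesc h).filter (fun a => a ≠ 0)

/-- The `i`-th largest eigenvalue. -/
def eigDesc {d : ℕ} {ρ : Matrix (Fin d) (Fin d) ℂ} (h : ρ.IsHermitian) : Fin d → ℝ :=
  fun i => (eigListDesc h).getD i 0

/-- `q` majorizes `p` (both lists of reals in decreasing order): all partial sums of
`q` dominate those of `p`, with equal total sums. -/
def ListMajorizes (q p : List ℝ) : Prop :=
  (∀ k : ℕ, (p.take k).sum ≤ (q.take k).sum) ∧ p.sum = q.sum

/-- The type of candidate entanglement measures: a real-valued function on (matrices over)
every finite bipartite system. -/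
abbrev EMfun : Type 1 :=
  ∀ (nA nB : Type) [Fintype nA] [DecidableEq nA] [Fintype nB] [DecidableEq nB],
    Matrix (nA × nB) (nA × nB) ℂ → ℝ

/-- A separable state: a convex mixture of pure product states. -/
def SeparableState {nA nB : Type} [Fintype nA] [Fintype nB]
    (ρ : Matrix (nA × nB) (nA × nB) ℂ) : Prop :=
  ∃ (M : ℕ) (P : Fin M → ℝ) (φ : Fin M → nA → ℂ) (χ : Fin M → nB → ℂ),
    (∀ m, 0 ≤ P m) ∧ (∑ m, P m = 1) ∧
    (∀ m, star (φ m) ⬝ᵥ φ m = 1) ∧ (∀ m, star (χ m) ⬝ᵥ χ m = 1) ∧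
    ρ = ∑ m, P m • pureState (fun q => φ m q.1 * χ m q.2)

/-- A (dimension changing) Kraus family: `∑ₖ Mₖ† Mₖ = 1`. -/
def IsKrausFamily {n n' K : Type} [Fintype n] [DecidableEq n] [Fintype n'] [Fintype K]
    (M : K → Matrix n' n ℂ) : Prop :=
  ∑ k, (M k)ᴴ * M k = 1

/-- Local operation on A: `ρ ↦ ∑ₖ (Mₖ ⊗ 1) ρ (Mₖ ⊗ 1)†`. -/
def krausApplyA {nA nA' nB K : Type} [Fintype nA] [Fintype nA'] [Fintype nB]
    [DecidableEq nB] [Fintype K] (M : K → Matrix nA' nA ℂ)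
    (ρ : Matrix (nA × nB) (nA × nB) ℂ) : Matrix (nA' × nB) (nA' × nB) ℂ :=
  ∑ k, (M k ⊗ₖ (1 : Matrix nB nB ℂ)) * ρ * (M k ⊗ₖ (1 : Matrix nB nB ℂ))ᴴ

/-- Local operation on B: `ρ ↦ ∑ₖ (1 ⊗ Mₖ) ρ (1 ⊗ Mₖ)†`. -/
def krausApplyB {nA nB nB' K : Type} [Fintype nA] [DecidableEq nA] [Fintype nB]
    [Fintype nB'] [Fintype K] (M : K → Matrix nB' nB ℂ)
    (ρ : Matrix (nA × nB) (nA × nB) ℂ) : Matrix (nA × nB') (nA × nB') ℂ :=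
  ∑ k, ((1 : Matrix nA nA ℂ) ⊗ₖ M k) * ρ * ((1 : Matrix nA nA ℂ) ⊗ₖ M k)ᴴ

/-- Local operation on A with the classical outcome stored in an ancilla close to B:
`ρ ↦ ∑ₖ (Mₖ ⊗ 1) ρ (Mₖ ⊗ 1)† ⊗ |k⟩⟨k|` (written out entrywise, the ancilla being the
second factor of the new B system `nB × K`). -/
def flaggedKrausA {nA nA' nB K : Type} [Fintype nA] [Fintype nA'] [Fintype nB]
    [DecidableEq nB] [DecidableEq K] (M : K → Matrix nA' nA ℂ)
    (ρ : Matrix (nA × nB) (nA × nB) ℂ) :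
    Matrix (nA' × nB × K) (nA' × nB × K) ℂ :=
  Matrix.of fun x y =>
    if x.2.2 = y.2.2 then
      ((M x.2.2 ⊗ₖ (1 : Matrix nB nB ℂ)) * ρ * (M x.2.2 ⊗ₖ (1 : Matrix nB nB ℂ))ᴴ)
        (x.1, x.2.1) (y.1, y.2.1)
    else 0

/-- Local operation on B with the classical outcome stored in an ancilla close to A. -/
def flaggedKrausB {nA nB nB' K : Type} [Fintype nA] [DecidableEq nA] [Fintype nB]
    [Fintype nB'] [DecidableEq K] (M : K → Matrix nB' nB ℂ)
    (ρ : Matrix (nA × nB) (nA × nB) ℂ) :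
    Matrix ((nA × K) × nB') ((nA × K) × nB') ℂ :=
  Matrix.of fun x y =>
    if x.1.2 = y.1.2 then
      (((1 : Matrix nA nA ℂ) ⊗ₖ M x.1.2) * ρ * ((1 : Matrix nA nA ℂ) ⊗ₖ M x.1.2)ᴴ)
        (x.1.1, x.2) (y.1.1, y.2)
    else 0

/-- An entanglement monotone: nonnegative on states of all finite bipartite systems,
vanishing on separable states, and nonincreasing under local Kraus maps (on either side,
possibly changing the local dimension) and under local Kraus maps whose outcome is stored
in an orthonormal ancilla adjoined to the other system. -/
structure IsEntanglementMonotone (E : EMfun) : Prop where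
  nonneg : ∀ (nA nB : Type) [Fintype nA] [DecidableEq nA] [Fintype nB] [DecidableEq nB]
    (ρ : Matrix (nA × nB) (nA × nB) ℂ), IsDensityMatrix ρ → 0 ≤ E nA nB ρ
  vanish_separable : ∀ (nA nB : Type) [Fintype nA] [DecidableEq nA] [Fintype nB]
    [DecidableEq nB] (ρ : Matrix (nA × nB) (nA × nB) ℂ),
    IsDensityMatrix ρ → SeparableState ρ → E nA nB ρ = 0
  mono_krausA : ∀ (nA nA' nB K : Type) [Fintype nA] [DecidableEq nA] [Fintype nA']
    [DecidableEq nA'] [Fintype nB] [DecidableEq nB] [Fintype K]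
    (M : K → Matrix nA' nA ℂ), IsKrausFamily M →
    ∀ ρ : Matrix (nA × nB) (nA × nB) ℂ, IsDensityMatrix ρ →
      E nA' nB (krausApplyA M ρ) ≤ E nA nB ρ
  mono_krausB : ∀ (nA nB nB' K : Type) [Fintype nA] [DecidableEq nA] [Fintype nB]
    [DecidableEq nB] [Fintype nB'] [DecidableEq nB'] [Fintype K]
    (M : K → Matrix nB' nB ℂ), IsKrausFamily M →
    ∀ ρ : Matrix (nA × nB) (nA × nB) ℂ, IsDensityMatrix ρ →
      E nA nB' (krausApplyB M ρ) ≤ E nA nB ρ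
  mono_flaggedA : ∀ (nA nA' nB K : Type) [Fintype nA] [DecidableEq nA] [Fintype nA']
    [DecidableEq nA'] [Fintype nB] [DecidableEq nB] [Fintype K] [DecidableEq K]
    (M : K → Matrix nA' nA ℂ), IsKrausFamily M →
    ∀ ρ : Matrix (nA × nB) (nA × nB) ℂ, IsDensityMatrix ρ →
      E nA' (nB × K) (flaggedKrausA M ρ) ≤ E nA nB ρ
  mono_flaggedB : ∀ (nA nB nB' K : Type) [Fintype nA] [DecidableEq nA] [Fintype nB]
    [DecidableEq nB] [Fintype nB'] [DecidableEq nB'] [Fintype K] [DecidableEq K]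
    (M : K → Matrix nB' nB ℂ), IsKrausFamily M →
    ∀ ρ : Matrix (nA × nB) (nA × nB) ℂ, IsDensityMatrix ρ →
      E (nA × K) nB' (flaggedKrausB M ρ) ≤ E nA nB ρ

/-- `Sloc E nA ρA` : the maximal entanglement `E(ρ)` over all states `ρ` of all composite
systems `A⊗B` whose reduced density matrix on A is `ρA` (eq. (1) of the paper). -/
def Sloc (E : EMfun) (nA : Type) [Fintype nA] [DecidableEq nA]
    (ρA : Matrix nA nA ℂ) : ℝ :=
  sSup { x : ℝ | ∃ (nB : Type) (_ : Fintype nB) (_ : DecidableEq nB)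
    (ρ : Matrix (nA × nB) (nA × nB) ℂ),
    IsDensityMatrix ρ ∧ ptraceB ρ = ρA ∧ x = E nA nB ρ }


/-! ### Conjugation by a local operator -/

/-- The local map `ρ ↦ (M ⊗ 1) ρ (M ⊗ 1)†` on A given by a single operator `M`, which need not be
an isometry; the outcome is not normalized. -/
def localConj {nA nA' nB : Type} [Fintype nA] [Fintype nB] [DecidableEq nB]
    (M : Matrix nA' nA ℂ) (ρ : Matrix (nA × nB) (nA × nB) ℂ) :
    Matrix (nA' × nB) (nA' × nB) ℂ :=
  (M ⊗ₖ (1 : Matrix nB nB ℂ)) * ρ * (M ⊗ₖ (1 : Matrix nB nB ℂ))ᴴ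

lemma ptraceB_localConj {nA nA' nB : Type} [Fintype nA] [Fintype nB] [DecidableEq nB]
    (M : Matrix nA' nA ℂ) (ρ : Matrix (nA × nB) (nA × nB) ℂ) :
    ptraceB (localConj M ρ) = M * ptraceB ρ * Mᴴ := by
  ext i j
  simp only [ptraceB, localConj, Matrix.of_apply, Matrix.mul_apply, Matrix.conjTranspose_apply,
    Matrix.kroneckerMap_apply, Matrix.one_apply, Fintype.sum_prod_type, mul_ite, mul_one,
    mul_zero, ite_mul, zero_mul, Finset.sum_ite_eq, Finset.mem_univ, if_true, apply_ite star, star_zero, Finset.mul_sum, Finset.sum_mul]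
  rw [Finset.sum_comm]
  refine Finset.sum_congr rfl fun k _ => ?_
  rw [Finset.sum_comm]

lemma trace_ptraceB {nA nB : Type} [Fintype nA] [Fintype nB]
    (ρ : Matrix (nA × nB) (nA × nB) ℂ) : (ptraceB ρ).trace = ρ.trace := by
  simp [ptraceB, Matrix.trace, Fintype.sum_prod_type]

lemma localConj_localConj {nA nA' nA'' nB : Type} [Fintype nA] [Fintype nA'] [Fintype nB]
    [DecidableEq nB] (N : Matrix nA'' nA' ℂ) (M : Matrix nA' nA ℂ)
    (ρ : Matrix (nA × nB) (nA × nB) ℂ) :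
    localConj N (localConj M ρ) = localConj (N * M) ρ := by
  have h : (N * M) ⊗ₖ (1 : Matrix nB nB ℂ) =
      (N ⊗ₖ (1 : Matrix nB nB ℂ)) * (M ⊗ₖ (1 : Matrix nB nB ℂ)) := by
    rw [← Matrix.mul_kronecker_mul, one_mul]
  simp only [localConj, h, Matrix.conjTranspose_mul, Matrix.mul_assoc]

lemma localConj_one {nA nB : Type} [Fintype nA] [DecidableEq nA] [Fintype nB]
    [DecidableEq nB] (ρ : Matrix (nA × nB) (nA × nB) ℂ) : localConj 1 ρ = ρ := by
  simp [localConj]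

lemma posSemidef_localConj {nA nA' nB : Type} [Fintype nA] [Fintype nA'] [Fintype nB]
    [DecidableEq nB] (M : Matrix nA' nA ℂ) {ρ : Matrix (nA × nB) (nA × nB) ℂ}
    (hρ : ρ.PosSemidef) : (localConj M ρ).PosSemidef :=
  hρ.mul_mul_conjTranspose_same _

/-- A positive `ρ` is annihilated by every local operator `Q` on A for which `Q ρ_A Q†`
vanishes: `(Q ⊗ 1) ρ (Q ⊗ 1)†` is positive with zero trace, and `Q B† B Q† = 0`
forces `Q B† = 0`. -/
lemma kronecker_mul_eq_zero {nA nA' nB : Type} [Fintype nA] [Fintype nA'] [Fintype nB]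
    [DecidableEq nB] (Q : Matrix nA' nA ℂ) {ρ : Matrix (nA × nB) (nA × nB) ℂ}
    (hρ : ρ.PosSemidef) (hQ : Q * ptraceB ρ * Qᴴ = 0) :
    (Q ⊗ₖ (1 : Matrix nB nB ℂ)) * ρ = 0 := by
  have h0 : localConj Q ρ = 0 := by
    rw [← (posSemidef_localConj Q hρ).trace_eq_zero_iff, ← trace_ptraceB, ptraceB_localConj,
      hQ, Matrix.trace_zero]
  open scoped MatrixOrder in
  obtain ⟨B, rfl⟩ := CStarAlgebra.nonneg_iff_eq_star_mul_self.mp hρ.nonneg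
  rw [Matrix.star_eq_conjTranspose] at h0 ⊢
  have h1 : ((Q ⊗ₖ (1 : Matrix nB nB ℂ)) * Bᴴ) * ((Q ⊗ₖ (1 : Matrix nB nB ℂ)) * Bᴴ)ᴴ = 0 := by
    rw [← h0, localConj, Matrix.conjTranspose_mul, Matrix.conjTranspose_conjTranspose]
    simp only [Matrix.mul_assoc]
  rw [Matrix.self_mul_conjTranspose_eq_zero] at h1
  rw [← Matrix.mul_assoc, h1, Matrix.zero_mul]

lemma isDensityMatrix_localConj {nA nA' nB : Type} [Fintype nA] [DecidableEq nA] [Fintype nA']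
    [Fintype nB] [DecidableEq nB] {V : Matrix nA' nA ℂ} (hV : Vᴴ * V = 1)
    {ρ : Matrix (nA × nB) (nA × nB) ℂ} (hρ : IsDensityMatrix ρ) :
    IsDensityMatrix (localConj V ρ) := by
  refine ⟨posSemidef_localConj V hρ.1, ?_⟩
  rw [← trace_ptraceB, ptraceB_localConj, Matrix.trace_mul_comm, ← Matrix.mul_assoc, hV,
    Matrix.one_mul, trace_ptraceB, hρ.2]

lemma E_localConj_le {E : EMfun} (hE : IsEntanglementMonotone E) {nA nA' nB : Type} [Fintype nA]
    [DecidableEq nA] [Fintype nA'] [DecidableEq nA'] [Fintype nB] [DecidableEq nB]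
    {V : Matrix nA' nA ℂ} (hV : Vᴴ * V = 1)
    {ρ : Matrix (nA × nB) (nA × nB) ℂ} (hρ : IsDensityMatrix ρ) :
    E nA' nB (localConj V ρ) ≤ E nA nB ρ := by
  have h := hE.mono_krausA nA nA' nB Unit (fun _ => V) (by simp [IsKrausFamily, hV]) ρ hρ
  simpa [krausApplyA, localConj] using h

/-! ### The local left inverse of an isometry -/

/-- The compression `V†` is completed to a Kraus family by the operators `|a⟩⟨j| (1 - V V†)`,
where `a` is a fixed basis vector of A and `j` runs over a basis of A'. -/
def retractKraus {nA nA' : Type} [Fintype nA] [DecidableEq nA] [DecidableEq nA']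
    [Fintype nA'] (a : nA) (V : Matrix nA' nA ℂ) : Option nA' → Matrix nA nA' ℂ
  | none => Vᴴ
  | some j => Matrix.single a j (1 : ℂ) * (1 - V * Vᴴ)

lemma isKrausFamily_retractKraus {nA nA' : Type} [Fintype nA] [DecidableEq nA] [DecidableEq nA']
    [Fintype nA'] (a : nA) {V : Matrix nA' nA ℂ} (hV : Vᴴ * V = 1) :
    IsKrausFamily (retractKraus a V) := by
  have hH : (1 - V * Vᴴ)ᴴ = 1 - V * Vᴴ := by simp
  have hI : (1 - V * Vᴴ) * (1 - V * Vᴴ) = 1 - V * Vᴴ := by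
    have : V * Vᴴ * (V * Vᴴ) = V * Vᴴ := by
      rw [Matrix.mul_assoc, ← Matrix.mul_assoc Vᴴ, hV, Matrix.one_mul]
    simp [mul_sub, sub_mul, this]
  have hs : ∀ j : nA', (Matrix.single a j (1 : ℂ) * (1 - V * Vᴴ))ᴴ *
      (Matrix.single a j (1 : ℂ) * (1 - V * Vᴴ)) =
      (1 - V * Vᴴ) * Matrix.single j j 1 * (1 - V * Vᴴ) := by
    intro j
    rw [Matrix.conjTranspose_mul, hH, Matrix.conjTranspose_single, star_one, Matrix.mul_assoc,
      ← Matrix.mul_assoc (Matrix.single j a 1), Matrix.single_mul_single_same, one_mul,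
      Matrix.mul_assoc]
  have h1 : ∑ j : nA', Matrix.single j j (1 : ℂ) = 1 := by
    ext x y
    by_cases h : x = y
    · subst h
      simp [Matrix.sum_apply, Matrix.single_apply]
    · rw [Matrix.one_apply_ne h, Matrix.sum_apply]
      refine Finset.sum_eq_zero fun j _ => Matrix.single_apply_of_ne _ _ _ _ _ ?_
      rintro ⟨rfl, rfl⟩
      exact h rfl
  simp only [IsKrausFamily, Fintype.sum_option, retractKraus, hs]
  rw [← Finset.sum_mul, ← Finset.mul_sum, h1, Matrix.mul_one, hI,
    Matrix.conjTranspose_conjTranspose, add_sub_cancel]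

/-- A positive matrix whose marginal is `V σ V†` for an isometry `V` is supported on `range V ⊗ B`,
so the operators `retractKraus a V (some j)` annihilate it and the family acts as `V†` alone. -/
lemma retract_of_marginal {nA nA' nB : Type} [Fintype nA] [DecidableEq nA] [Fintype nA']
    [DecidableEq nA'] [Fintype nB] [DecidableEq nB] (a : nA)
    {V : Matrix nA' nA ℂ} (hV : Vᴴ * V = 1) {σ : Matrix nA nA ℂ}
    {τ : Matrix (nA' × nB) (nA' × nB) ℂ} (hτ : τ.PosSemidef)
    (hm : ptraceB τ = V * σ * Vᴴ) :
    localConj V (localConj Vᴴ τ) = τ ∧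
      krausApplyA (retractKraus a V) τ = localConj Vᴴ τ := by
  have hQV : (1 - V * Vᴴ) * V = 0 := by
    rw [Matrix.sub_mul, Matrix.mul_assoc, hV, Matrix.one_mul, Matrix.mul_one, sub_self]
  have hk : ((1 - V * Vᴴ) ⊗ₖ (1 : Matrix nB nB ℂ)) * τ = 0 := by
    apply kronecker_mul_eq_zero _ hτ
    rw [hm, ← Matrix.mul_assoc, ← Matrix.mul_assoc, hQV]
    simp
  have hP : ((V * Vᴴ) ⊗ₖ (1 : Matrix nB nB ℂ)) * τ = τ := by
    have h : (1 - V * Vᴴ) ⊗ₖ (1 : Matrix nB nB ℂ) = 1 - (V * Vᴴ) ⊗ₖ (1 : Matrix nB nB ℂ) := by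
      rw [eq_sub_iff_add_eq, ← Matrix.add_kronecker, sub_add_cancel, Matrix.one_kronecker_one]
    rw [h, Matrix.sub_mul, Matrix.one_mul, sub_eq_zero] at hk
    exact hk.symm
  have hP' : τ * ((V * Vᴴ) ⊗ₖ (1 : Matrix nB nB ℂ))ᴴ = τ := by
    have := congrArg Matrix.conjTranspose hP
    rwa [Matrix.conjTranspose_mul, hτ.isHermitian.eq] at this
  constructor
  · rw [localConj_localConj, localConj, hP, hP']
  · have hz : ∀ j : nA',
        ((Matrix.single a j (1 : ℂ) * (1 - V * Vᴴ)) ⊗ₖ (1 : Matrix nB nB ℂ)) * τ = 0 := by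
      intro j
      have h : (Matrix.single a j (1 : ℂ) * (1 - V * Vᴴ)) ⊗ₖ (1 : Matrix nB nB ℂ) =
          (Matrix.single a j (1 : ℂ) ⊗ₖ (1 : Matrix nB nB ℂ)) *
            ((1 - V * Vᴴ) ⊗ₖ (1 : Matrix nB nB ℂ)) := by
        rw [← Matrix.mul_kronecker_mul, one_mul]
      rw [h, Matrix.mul_assoc, hk, Matrix.mul_zero]
    simp only [krausApplyA, Fintype.sum_option, retractKraus, hz, Matrix.zero_mul,
      Finset.sum_const_zero, add_zero, localConj]

/-! ### Invariance under isometries -/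

/-- Both suprema run over the same set of values, so no boundedness of these sets is needed. -/
lemma Sloc_isometry {E : EMfun} (hE : IsEntanglementMonotone E) {nA nA' : Type} [Fintype nA]
    [DecidableEq nA] [Fintype nA'] [DecidableEq nA'] (a : nA) {V : Matrix nA' nA ℂ}
    (hV : Vᴴ * V = 1) (σ : Matrix nA nA ℂ) :
    Sloc E nA' (V * σ * Vᴴ) = Sloc E nA σ := by
  -- `V` decreases `E` weakly, and the retraction takes the image state back to `ρ`.
  have key : ∀ (nB : Type) [Fintype nB] [DecidableEq nB] (ρ : Matrix (nA × nB) (nA × nB) ℂ),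
      IsDensityMatrix ρ → ptraceB ρ = σ → E nA' nB (localConj V ρ) = E nA nB ρ := by
    intro nB _ _ ρ hρ hm
    refine le_antisymm (E_localConj_le hE hV hρ) ?_
    have hd := isDensityMatrix_localConj hV hρ
    have h := hE.mono_krausA nA' nA nB _ _ (isKrausFamily_retractKraus a hV) _ hd
    rwa [(retract_of_marginal a hV hd.1 (by rw [ptraceB_localConj, hm])).2,
      localConj_localConj, hV, localConj_one] at h
  unfold Sloc
  congr 1
  ext x
  constructor
  · rintro ⟨nB, i1, i2, τ, hτ, hm, rfl⟩
    have hr := (retract_of_marginal a hV hτ.1 hm).1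
    have hm' : ptraceB (localConj Vᴴ τ) = σ := by
      rw [ptraceB_localConj, hm, Matrix.conjTranspose_conjTranspose]
      calc Vᴴ * (V * σ * Vᴴ) * V = (Vᴴ * V) * σ * (Vᴴ * V) := by simp only [Matrix.mul_assoc]
        _ = σ := by rw [hV, Matrix.one_mul, Matrix.mul_one]
    have hd : IsDensityMatrix (localConj Vᴴ τ) := by
      refine ⟨posSemidef_localConj _ hτ.1, ?_⟩
      rw [← hτ.2, ← trace_ptraceB, ← trace_ptraceB τ, hm', hm, Matrix.trace_mul_comm,
        ← Matrix.mul_assoc, hV, Matrix.one_mul]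
    refine ⟨nB, i1, i2, localConj Vᴴ τ, hd, hm', ?_⟩
    rw [← key nB _ hd hm', hr]
  · rintro ⟨nB, i1, i2, ρ, hρ, hm, rfl⟩
    exact ⟨nB, i1, i2, localConj V ρ, isDensityMatrix_localConj hV hρ,
      by rw [ptraceB_localConj, hm], (key nB ρ hρ hm).symm⟩

/-! ### Mixtures of orthonormal families -/

/-- The matrix whose columns are the vectors of a family. -/
def colMatrix {ι n : Type} (v : ι → n → ℂ) : Matrix n ι ℂ := Matrix.of fun a i => v i a

lemma colMatrix_isometry {ι n : Type} [DecidableEq ι] [Fintype n] {v : ι → n → ℂ}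
    (hv : OrthonormalFamily v) : (colMatrix v)ᴴ * colMatrix v = 1 := by
  ext i j
  have := hv i j
  simp only [dotProduct, Pi.star_apply] at this
  simp only [colMatrix, Matrix.mul_apply, Matrix.conjTranspose_apply, Matrix.of_apply, this,
    Matrix.one_apply]
  congr

lemma sum_pureState {ι n : Type} [Fintype ι] [DecidableEq ι] (v : ι → n → ℂ) (p : ι → ℝ) :
    ∑ i, p i • pureState (v i) =
      colMatrix v * Matrix.diagonal (fun i => (p i : ℂ)) * (colMatrix v)ᴴ := by
  ext x y
  rw [Matrix.mul_apply, Matrix.sum_apply]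
  simp only [Matrix.mul_diagonal, Matrix.smul_apply, pureState, Matrix.vecMulVec_apply,
    colMatrix, Matrix.conjTranspose_apply, Matrix.of_apply, Pi.star_apply, Complex.real_smul]
  exact Finset.sum_congr rfl fun i _ => by ring

/-- `S_d` is invariant under local unitaries, and satisfies the
expansibility property: embedding a `d`-dimensional state into a `(d+1)`-dimensional
space (via orthonormal bases) does not change its value. -/
theorem statement_1 (E : EMfun) (hE : IsEntanglementMonotone E) :
    (∀ (d : ℕ) (ρA : Matrix (Fin d) (Fin d) ℂ), IsDensityMatrix ρA →
      ∀ U ∈ Matrix.unitaryGroup (Fin d) ℂ,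
        Sloc E (Fin d) (U * ρA * Uᴴ) = Sloc E (Fin d) ρA) ∧
    (∀ (d : ℕ) (p : Fin d → ℝ), (∀ i, 0 ≤ p i) → (∑ i, p i) = 1 →
      ∀ (v : Fin d → Fin d → ℂ) (w : Fin (d + 1) → Fin (d + 1) → ℂ),
        OrthonormalFamily v → OrthonormalFamily w →
        Sloc E (Fin (d + 1))
            (∑ i : Fin d, p i • pureState (w i.castSucc)) =
          Sloc E (Fin d) (∑ i : Fin d, p i • pureState (v i))) := by
  refine ⟨fun d ρA hρ U hU => ?_, fun d p _ hp v w hv hw => ?_⟩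
  · -- A density matrix has trace one, so the system is not zero-dimensional.
    have hd : 0 < d := by
      rcases Nat.eq_zero_or_pos d with rfl | h
      · have := hρ.2
        simp [Matrix.trace] at this
      · exact h
    exact Sloc_isometry hE ⟨0, hd⟩ (Matrix.mem_unitaryGroup_iff'.mp hU) ρA
  · have hd : 0 < d := by
      rcases Nat.eq_zero_or_pos d with rfl | h
      · simp at hp
      · exact h
    have hw' : OrthonormalFamily (fun i : Fin d => w i.castSucc) := by
      intro i j
      rw [hw]
      simp
    have hA := colMatrix_isometry hv
    have hA' : colMatrix v * (colMatrix v)ᴴ = 1 := mul_eq_one_comm.mp hA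
    have hB := colMatrix_isometry hw'
    rw [sum_pureState v, sum_pureState (fun i : Fin d => w i.castSucc)]
    set A := colMatrix v
    set B := colMatrix (fun i : Fin d => w i.castSucc)
    set D := Matrix.diagonal (fun i => (p i : ℂ))
    have hV : (B * Aᴴ)ᴴ * (B * Aᴴ) = 1 := by
      calc (B * Aᴴ)ᴴ * (B * Aᴴ) = A * (Bᴴ * B) * Aᴴ := by
            simp only [Matrix.conjTranspose_mul, Matrix.conjTranspose_conjTranspose,
              Matrix.mul_assoc]
        _ = 1 := by rw [hB, Matrix.mul_one, hA']
    have hS : (B * Aᴴ) * (A * D * Aᴴ) * (B * Aᴴ)ᴴ = B * D * Bᴴ := by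
      calc (B * Aᴴ) * (A * D * Aᴴ) * (B * Aᴴ)ᴴ = B * (Aᴴ * A) * D * (Aᴴ * A) * Bᴴ := by
            simp only [Matrix.conjTranspose_mul, Matrix.conjTranspose_conjTranspose,
              Matrix.mul_assoc]
        _ = B * D * Bᴴ := by rw [hA, Matrix.mul_one, Matrix.mul_one]
    rw [← hS]
    exact Sloc_isometry hE ⟨0, hd⟩ hV _

end
end

section
/- Let E be an entanglement monotone, ρ_A a state of a d-level system A, and S_d(ρ_A) = max E(ρ) over all states ρ of composite systems AB with tr_B ρ = ρ_A. Then this maximum is attained at any purification: for every pure state |Ψ⟩ of a composite system AB satisfying tr_B |Ψ⟩⟨Ψ| = ρ_A, one has S_d(ρ_A) = E(|Ψ⟩⟨Ψ|). In particular, for any state ρ of AB' with tr_{B'} ρ = ρ_A and any purification |Ψ⟩ of ρ, E(ρ) ≤ E(|Ψ⟩⟨Ψ|). -/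
/-!
All purifications of `ρ_A` dominate all extensions of `ρ_A`: if `Ψ` on `A ⊗ C` and `ρ` on `A ⊗ B`
have the same marginal on `A`, then a channel on `C` alone sends `|Ψ⟩⟨Ψ|` to `ρ` (`exists_kraus`),
so that monotonicity under local Kraus maps gives `E ρ ≤ E |Ψ⟩⟨Ψ|` (`le_purification`). Both halves
of the theorem are instances of this inequality, since `|Ψ⟩⟨Ψ|` is itself one of the states over
which the supremum is taken.

To build the channel, regard `Ψ` as a matrix `X` with rows indexed by `A`, and likewise an ensemble
decomposition of `ρ` as a matrix `Y`. Equality of the marginals reads `X Xᴴ = Y Yᴴ`, so `X W = Y`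
for the partial isometry `W = Xᴴ (X Xᴴ)⁺ Y` (`exists_partial_isometry`). The blocks of `W` are Kraus
operators; they are completed by the complementary projection `1 - W Wᴴ`, which annihilates `X` and
hence contributes nothing when applied to `Ψ`.
-/

open Matrix
open scoped ComplexOrder Kronecker Classical

noncomputable section

/-- Partial trace over the third factor (the auxiliary system B'') of a system
`A × (B' × B'')`. -/
def ptraceB'' {nA nB' nB'' : Type} [Fintype nB'']
    (ρ : Matrix (nA × nB' × nB'') (nA × nB' × nB'') ℂ) : Matrix (nA × nB') (nA × nB') ℂ :=
  Matrix.of fun x y => ∑ c, ρ (x.1, x.2, c) (y.1, y.2, c)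

/-- A Hermitian matrix has a Hermitian pseudo-inverse: invert its nonzero eigenvalues. -/
lemma exists_hermitian_pinv {n : Type} [Fintype n] [DecidableEq n] {A : Matrix n n ℂ}
    (hA : A.IsHermitian) : ∃ R : Matrix n n ℂ, Rᴴ = R ∧ A * R * A = A ∧ R * A * R = R := by
  -- `0⁻¹ = 0` makes the entrywise inverse of the eigenvalues the pseudo-inverse of the diagonal.
  let D : n → ℂ := fun i => (hA.eigenvalues i : ℂ)
  let φ := Unitary.conjStarAlgAut ℂ _ hA.eigenvectorUnitary
  have hφ : A = φ (diagonal D) := hA.spectral_theorem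
  refine ⟨φ (diagonal fun i => (D i)⁻¹), ?_, ?_, ?_⟩
  · rw [← star_eq_conjTranspose, ← map_star, star_eq_conjTranspose, diagonal_conjTranspose]
    congr 2
    ext i
    simp [D]
  · conv_lhs => rw [hφ]
    conv_rhs => rw [hφ]
    rw [← map_mul, ← map_mul, diagonal_mul_diagonal, diagonal_mul_diagonal]
    congr 2
    ext i
    by_cases hi : D i = 0 <;> simp [hi]
  · conv_lhs => enter [1, 2]; rw [hφ]
    rw [← map_mul, ← map_mul, diagonal_mul_diagonal, diagonal_mul_diagonal]
    congr 2
    ext i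
    by_cases hi : D i = 0 <;> simp [hi]

/-- Two matrices with equal Gram matrices `X Xᴴ = Y Yᴴ` are related by a partial isometry `W` on
the right. The witness for `P` is `W Wᴴ`, the projection onto the range of `Xᴴ`; only the identities
needed to complete `W` to a co-isometry without changing its effect on `X` are recorded. -/
lemma exists_partial_isometry {a m l : Type} [Fintype a] [Fintype m] [Fintype l]
    [DecidableEq m] (X : Matrix a m ℂ) (Y : Matrix a l ℂ) (h : X * Xᴴ = Y * Yᴴ) :
    ∃ (W : Matrix m l ℂ) (P : Matrix m m ℂ),
      X * W = Y ∧ X * P = X ∧ W * Wᴴ + (1 - P) * (1 - P)ᴴ = 1 := by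
  have hH : (X * Xᴴ).IsHermitian := isHermitian_mul_conjTranspose_self X
  obtain ⟨R, hR, hARA, hRAR⟩ := exists_hermitian_pinv hH
  have key : ∀ {k : Type} [Fintype k] (Z : Matrix a k ℂ), Z * Zᴴ = X * Xᴴ →
      X * Xᴴ * R * Z = Z := by
    intro k _ Z hZ
    have h0 : (X * Xᴴ * R - 1) * Z = 0 := by
      rw [← mul_self_mul_conjTranspose_eq_zero, hZ, Matrix.sub_mul, hARA, Matrix.one_mul, sub_self]
    rwa [Matrix.sub_mul, Matrix.one_mul, sub_eq_zero] at h0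
  refine ⟨Xᴴ * R * Y, Xᴴ * R * X, ?_, ?_, ?_⟩
  · simpa only [Matrix.mul_assoc] using key Y h.symm
  · simpa only [Matrix.mul_assoc] using key X rfl
  · have hP : (Xᴴ * R * X)ᴴ = Xᴴ * R * X := by
      simp only [conjTranspose_mul, conjTranspose_conjTranspose, hR, Matrix.mul_assoc]
    have hW : Xᴴ * R * Y * (Xᴴ * R * Y)ᴴ = Xᴴ * R * X := by
      calc Xᴴ * R * Y * (Xᴴ * R * Y)ᴴ = Xᴴ * (R * (Y * Yᴴ) * R) * X := by
            simp only [conjTranspose_mul, conjTranspose_conjTranspose, hR, Matrix.mul_assoc]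
        _ = Xᴴ * R * X := by rw [← h, hRAR]
    have hPP : Xᴴ * R * X * (Xᴴ * R * X) = Xᴴ * R * X := by
      calc Xᴴ * R * X * (Xᴴ * R * X) = Xᴴ * (R * (X * Xᴴ) * R) * X := by
            simp only [Matrix.mul_assoc]
        _ = Xᴴ * R * X := by rw [hRAR]
    rw [hW, conjTranspose_sub, conjTranspose_one, hP, Matrix.sub_mul, Matrix.mul_sub,
      Matrix.mul_sub, hPP]
    simp

lemma krausApplyB_pureState {nA nB nB' K : Type} [Fintype nA] [DecidableEq nA] [Fintype nB]
    [Fintype nB'] [Fintype K] (M : K → Matrix nB' nB ℂ) (Ψ : nA × nB → ℂ)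
    (x y : nA × nB') :
    krausApplyB M (pureState Ψ) x y =
      ∑ k, (∑ c, M k x.2 c * Ψ (x.1, c)) * star (∑ c, M k y.2 c * Ψ (y.1, c)) := by
  have hv : ∀ k, ∀ z : nA × nB', (((1 : Matrix nA nA ℂ) ⊗ₖ M k) *ᵥ Ψ) z =
      ∑ c, M k z.2 c * Ψ (z.1, c) := by
    intro k z
    simp [mulVec, dotProduct, Fintype.sum_prod_type, kroneckerMap_apply, one_apply, ite_mul]
  simp only [krausApplyB, pureState, Matrix.sum_apply]
  refine Finset.sum_congr rfl fun k _ => ?_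
  rw [mul_vecMulVec, vecMulVec_mul, ← star_mulVec, vecMulVec_apply, Pi.star_apply, hv, hv]

lemma isDensityMatrix_pureState {n : Type} [Fintype n] (Ψ : n → ℂ)
    (h : star Ψ ⬝ᵥ Ψ = 1) : IsDensityMatrix (pureState Ψ) := by
  refine ⟨posSemidef_vecMulVec_self_star Ψ, ?_⟩
  rw [pureState, trace_vecMulVec, dotProduct_comm, h]

/-- A purification of `ρ_A` can be turned into any other extension of `ρ_A` by a channel acting
on the purifying system alone. -/
lemma exists_kraus {nA nB nC : Type} [Fintype nA] [DecidableEq nA] [Fintype nB]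
    [DecidableEq nB] [Fintype nC] [DecidableEq nC]
    (ρ : Matrix (nA × nB) (nA × nB) ℂ) (hρ : IsDensityMatrix ρ) (Ψ : nA × nC → ℂ)
    (h : ptraceB (pureState Ψ) = ptraceB ρ) :
    ∃ M : (nA × nB) ⊕ nC → Matrix nB nC ℂ,
      IsKrausFamily M ∧ krausApplyB M (pureState Ψ) = ρ := by
  obtain ⟨S, hS⟩ : ∃ S : Matrix (nA × nB) (nA × nB) ℂ, ρ = Sᴴ * S := by
    open scoped MatrixOrder in
    exact CStarAlgebra.nonneg_iff_eq_star_mul_self.mp hρ.1.nonneg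
  obtain ⟨b₀⟩ : Nonempty nB := by
    by_contra hne
    rw [not_nonempty_iff] at hne
    simpa [trace] using hρ.2
  let X : Matrix nA nC ℂ := of fun a c => Ψ (a, c)
  -- The rows of `S` are the conjugates of the (unnormalized) vectors of an ensemble for `ρ`.
  let Y : Matrix nA ((nA × nB) × nB) ℂ := of fun a p => star (S p.1 (a, p.2))
  have hXY : X * Xᴴ = Y * Yᴴ := by
    ext i j
    have hij := congrFun (congrFun h i) j
    simp only [ptraceB, pureState, of_apply, vecMulVec_apply, Pi.star_apply, hS, mul_apply,
      conjTranspose_apply] at hij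
    simp only [X, Y, mul_apply, conjTranspose_apply, of_apply, star_star, hij]
    rw [Fintype.sum_prod_type, Finset.sum_comm]
  obtain ⟨W, P, hW, hP, hWP⟩ := exists_partial_isometry X Y hXY
  -- The second family of Kraus operators completes the first to a channel, and kills `Ψ`.
  refine ⟨Sum.elim (fun k => of fun b c => W c (k, b))
    (fun k => of fun b c => if b = b₀ then (1 - P) c k else 0), ?_, ?_⟩
  · ext c c'
    have hcc := congrFun (congrFun hWP c') c
    have h1 : (1 : Matrix nC nC ℂ) c' c = (1 : Matrix nC nC ℂ) c c' := by
      rw [one_apply, one_apply]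
      simp only [eq_comm]
    rw [Matrix.add_apply, mul_apply, mul_apply, Fintype.sum_prod_type, h1] at hcc
    rw [← hcc]
    simp only [Matrix.sum_apply, Fintype.sum_sum_type, Sum.elim_inl, Sum.elim_inr, mul_apply,
      conjTranspose_apply, of_apply]
    congr 1
    · simp only [mul_comm]
    · refine Finset.sum_congr rfl fun k _ => ?_
      rw [Finset.sum_eq_single b₀ (fun b _ hb => by simp [hb]) (by simp)]
      simp only [if_true]
      exact mul_comm _ _
  · ext x y
    rw [krausApplyB_pureState]
    have h1 : ∀ k, ∀ z : nA × nB, ∑ c, W c (k, z.2) * Ψ (z.1, c) = star (S k z) := by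
      intro k z
      have hz := congrFun (congrFun hW z.1) (k, z.2)
      simp only [X, Y, mul_apply, of_apply] at hz
      simpa only [mul_comm] using hz
    have h2 : ∀ k, ∀ z : nA × nB,
        ∑ c, (if z.2 = b₀ then (1 - P) c k else 0) * Ψ (z.1, c) = 0 := by
      intro k z
      have h0 : X * (1 - P) = 0 := by rw [Matrix.mul_sub, hP, Matrix.mul_one, sub_self]
      have hz := congrFun (congrFun h0 z.1) k
      simp only [X, mul_apply, of_apply, Matrix.zero_apply] at hz
      split_ifs
      · simpa only [mul_comm] using hz
      · simp
    simp only [Fintype.sum_sum_type, Sum.elim_inl, Sum.elim_inr, of_apply, h1, h2]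
    simp [hS, mul_apply]

/-- Every extension of `ρ_A` is at most as entangled as every purification of `ρ_A`. -/
lemma le_purification {E : EMfun} (hE : IsEntanglementMonotone E) {nA nB nC : Type}
    [Fintype nA] [DecidableEq nA] [Fintype nB] [DecidableEq nB] [Fintype nC] [DecidableEq nC]
    (ρ : Matrix (nA × nB) (nA × nB) ℂ) (hρ : IsDensityMatrix ρ) (Ψ : nA × nC → ℂ)
    (hΨ : star Ψ ⬝ᵥ Ψ = 1) (h : ptraceB (pureState Ψ) = ptraceB ρ) :
    E nA nB ρ ≤ E nA nC (pureState Ψ) := by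
  obtain ⟨M, hM, hMρ⟩ := exists_kraus ρ hρ Ψ h
  simpa only [hMρ] using
    hE.mono_krausB nA nC nB _ M hM (pureState Ψ) (isDensityMatrix_pureState Ψ hΨ)

/-- The maximum defining `S_d(ρ_A)` is attained at any purification:
for every pure state `|Ψ⟩` of a composite system AB with `tr_B |Ψ⟩⟨Ψ| = ρ_A`,
`S_d(ρ_A) = E(|Ψ⟩⟨Ψ|)`; and for any state `ρ` of a system AB' with `tr_{B'} ρ = ρ_A`
and any purification `|Ψ⟩` of `ρ`, `E(ρ) ≤ E(|Ψ⟩⟨Ψ|)`. -/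
theorem statement_3 (E : EMfun) (hE : IsEntanglementMonotone E)
    {d : ℕ} (ρA : Matrix (Fin d) (Fin d) ℂ) (hρA : IsDensityMatrix ρA) :
    (∀ (nB : Type) [Fintype nB] [DecidableEq nB] (Ψ : Fin d × nB → ℂ),
      star Ψ ⬝ᵥ Ψ = 1 → ptraceB (pureState Ψ) = ρA →
      Sloc E (Fin d) ρA = E (Fin d) nB (pureState Ψ)) ∧
    (∀ (nB' nB'' : Type) [Fintype nB'] [DecidableEq nB'] [Fintype nB''] [DecidableEq nB'']
      (ρ : Matrix (Fin d × nB') (Fin d × nB') ℂ), IsDensityMatrix ρ → ptraceB ρ = ρA →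
      ∀ Ψ : Fin d × nB' × nB'' → ℂ, star Ψ ⬝ᵥ Ψ = 1 → ptraceB'' (pureState Ψ) = ρ →
      E (Fin d) nB' ρ ≤ E (Fin d) (nB' × nB'') (pureState Ψ)) := by
  refine ⟨?_, ?_⟩
  · intro nB _ _ Ψ hΨ hA
    refine IsGreatest.csSup_eq ⟨?_, ?_⟩
    · exact ⟨nB, _, _, pureState Ψ, isDensityMatrix_pureState Ψ hΨ, hA, rfl⟩
    · rintro x ⟨nC, _, _, ρ, hρ, hρA', rfl⟩
      exact le_purification hE ρ hρ Ψ hΨ (hA.trans hρA'.symm)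
  · intro nB' nB'' _ _ _ _ ρ hρ _ Ψ hΨ hΨρ
    refine le_purification hE ρ hρ Ψ hΨ ?_
    rw [← hΨρ]
    ext i j
    simp only [ptraceB, ptraceB'', of_apply]
    exact Fintype.sum_prod_type _

end
end

section
/- Let S_d be nonnegative concave functions on states of d-level systems and E^{cr}(ρ) = inf Σ_m P_m S_d(tr_B |Ψ_m⟩⟨Ψ_m|) over pure-state ensembles of ρ. Then for any state ρ of a finite bipartite system AB and any Kraus operators {B_k} acting on B with Σ_k B_k† B_k = I_B, one has Σ_k p_k E^{cr}(ρ_k) ≤ E^{cr}(ρ), where p_k = tr((I_A ⊗ B_k) ρ (I_A ⊗ B_k†)) and ρ_k = (I_A ⊗ B_k) ρ (I_A ⊗ B_k†)/p_k (terms with p_k = 0 omitted). Moreover E^{cr} is convex: E^{cr}(Σ_k q_k σ_k) ≤ Σ_k q_k E^{cr}(σ_k) for probabilities q_k and states σ_k of AB. -/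
/-!
Both inequalities come from transporting pure-state ensembles.

Let `{P m, Ψ m}` be an ensemble of `ρ`. The measurement `{B k}` sends `Ψ m` to
`(1 ⊗ B k) Ψ m = √(c k m) u k m` with `u k m` a unit vector (`exists_normalized`), so the weights
`P m * c k m / p k` and vectors `u k m` form an ensemble of the post-measurement state `ρ k`. Hence
`∑ₖ p k * Ecr (ρ k) ≤ ∑ₘ P m * ∑ₖ c k m * S (tr_B u k m)`. By the Kraus condition the reduced state
on A is unchanged on average, `∑ₖ c k m • tr_B (u k m) = tr_B (Ψ m)` (`sum_ptraceB_kraus`), and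
concavity of `S` bounds the inner sum by `S (tr_B (Ψ m))`. Taking the infimum over ensembles of `ρ`
gives the first claim.

For convexity, near-optimal ensembles of the `σ k`, weighted by `q k`, combine into an ensemble of
`∑ₖ q k • σ k`.

Since `Ecr` is a real infimum, nonnegativity of `S` is used to bound the set of ensemble averages
from below, and `ensembleValues_nonempty` shows that it is nonempty for a state.
-/

open Matrix
open scoped ComplexOrder Kronecker Classical

noncomputable section

/-- A family of local entropy-like functions, one for each finite local system. -/
abbrev SFam : Type 1 :=
  ∀ (n : Type) [Fintype n] [DecidableEq n], Matrix n n ℂ → ℝ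

/-- The convex roof `E^{cr}(ρ) = inf ∑ₘ Pₘ S(tr_B |Ψₘ⟩⟨Ψₘ|)` over all finite ensembles
of pure states `{Pₘ, Ψₘ}` with `∑ₘ Pₘ |Ψₘ⟩⟨Ψₘ| = ρ`. -/
def Ecr (S : SFam) {nA nB : Type} [Fintype nA] [DecidableEq nA] [Fintype nB]
    [DecidableEq nB] (ρ : Matrix (nA × nB) (nA × nB) ℂ) : ℝ :=
  sInf { r : ℝ | ∃ (M : ℕ) (P : Fin M → ℝ) (Ψ : Fin M → nA × nB → ℂ),
    (∀ m, 0 ≤ P m) ∧ (∀ m, star (Ψ m) ⬝ᵥ Ψ m = 1) ∧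
    (∑ m, P m • pureState (Ψ m)) = ρ ∧
    r = ∑ m, P m * S nA (ptraceB (pureState (Ψ m))) }

/-! ### Pure states and their reductions -/

lemma pureState_trace {n : Type} [Fintype n] (ψ : n → ℂ) :
    (pureState ψ).trace = star ψ ⬝ᵥ ψ := by
  rw [pureState, trace_vecMulVec, dotProduct_comm]

lemma mul_pureState_mul {n n' : Type} [Fintype n] (W : Matrix n' n ℂ) (ψ : n → ℂ) :
    W * pureState ψ * Wᴴ = pureState (W *ᵥ ψ) := by
  rw [pureState, mul_vecMulVec, vecMulVec_mul, pureState, star_mulVec]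

/-- Normalization of a possibly zero vector; for the zero vector the weight is `0` and the
unit vector is arbitrary, which is why `n` has to be nonempty. -/
lemma exists_normalized {n : Type} [Fintype n] [Nonempty n] (φ : n → ℂ) :
    ∃ (c : ℝ) (u : n → ℂ), 0 ≤ c ∧ star u ⬝ᵥ u = 1 ∧ pureState φ = c • pureState u := by
  obtain ⟨r, hr, hrφ⟩ : ∃ r : ℝ, 0 ≤ r ∧ star φ ⬝ᵥ φ = (r : ℂ) := by
    have h : 0 ≤ star φ ⬝ᵥ φ := dotProduct_star_self_nonneg φ
    rw [Complex.le_def] at h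
    refine ⟨(star φ ⬝ᵥ φ).re, h.1, ?_⟩
    apply Complex.ext <;> simp [← h.2]
  rcases hr.eq_or_lt with h0 | hpos
  · obtain rfl : φ = 0 := by
      rw [← h0] at hrφ
      exact dotProduct_star_self_eq_zero.mp (by simpa using hrφ)
    refine ⟨0, Pi.single (Classical.arbitrary n) 1, le_rfl, ?_, ?_⟩
    · simp
    · simp [pureState]
  · have hs : ((Real.sqrt r : ℝ) : ℂ) ^ 2 = (r : ℂ) := by
      rw [← Complex.ofReal_pow, Real.sq_sqrt hr]
    have hs0 : ((Real.sqrt r : ℝ) : ℂ) ≠ 0 := by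
      exact_mod_cast (Real.sqrt_pos.mpr hpos).ne'
    refine ⟨r, ((Real.sqrt r : ℝ) : ℂ)⁻¹ • φ, hr, ?_, ?_⟩
    · rw [star_smul, smul_dotProduct, dotProduct_smul, hrφ, ← hs]
      simp only [star_inv₀, Complex.star_def, Complex.conj_ofReal, smul_eq_mul]
      field_simp
    · ext i j
      simp only [pureState, vecMulVec_apply, Matrix.smul_apply, Pi.smul_apply, Pi.star_apply,
        smul_eq_mul, Complex.real_smul, star_mul', star_inv₀, Complex.star_def,
        Complex.conj_ofReal]
      rw [← hs]
      field_simp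

/-- The coefficient matrix of a bipartite vector. -/
def coeffMatrix {nA nB : Type} (ψ : nA × nB → ℂ) : Matrix nA nB ℂ :=
  Matrix.of fun a b => ψ (a, b)

lemma ptraceB_pureState {nA nB : Type} [Fintype nB] (ψ : nA × nB → ℂ) :
    ptraceB (pureState ψ) = coeffMatrix ψ * (coeffMatrix ψ)ᴴ := by
  ext i j
  simp [ptraceB, pureState, coeffMatrix, mul_apply, vecMulVec_apply]

lemma coeffMatrix_one_kronecker {nA nB nB' : Type} [Fintype nA] [DecidableEq nA] [Fintype nB]
    (M : Matrix nB' nB ℂ) (ψ : nA × nB → ℂ) :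
    coeffMatrix (((1 : Matrix nA nA ℂ) ⊗ₖ M) *ᵥ ψ) = coeffMatrix ψ * Mᵀ := by
  ext a b
  simp only [coeffMatrix, of_apply, mulVec, dotProduct, kroneckerMap_apply, mul_apply,
    transpose_apply, Fintype.sum_prod_type, one_apply]
  rw [Finset.sum_eq_single a]
  · simp [mul_comm]
  · intro x _ hx
    simp [hx.symm]
  · simp

lemma ptraceB_trace {nA nB : Type} [Fintype nA] [Fintype nB]
    (X : Matrix (nA × nB) (nA × nB) ℂ) : (ptraceB X).trace = X.trace := by
  simp [ptraceB, trace, Fintype.sum_prod_type]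

lemma ptraceB_smul {nA nB : Type} [Fintype nB] (c : ℝ)
    (X : Matrix (nA × nB) (nA × nB) ℂ) : ptraceB (c • X) = c • ptraceB X := by
  ext i j
  simp [ptraceB, Finset.mul_sum]

lemma isDensityMatrix_ptraceB {nA nB : Type} [Fintype nA] [Fintype nB] {ψ : nA × nB → ℂ}
    (h : star ψ ⬝ᵥ ψ = 1) : IsDensityMatrix (ptraceB (pureState ψ)) := by
  refine ⟨?_, ?_⟩
  · rw [ptraceB_pureState]
    exact posSemidef_self_mul_conjTranspose _
  · rw [ptraceB_trace, pureState_trace, h]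

/-- Nonselective operations on B do not change the reduced state on A. -/
lemma sum_ptraceB_kraus {nA nB nB' K : Type} [Fintype nA] [DecidableEq nA] [Fintype nB]
    [DecidableEq nB] [Fintype nB'] [Fintype K] {B : K → Matrix nB' nB ℂ}
    (hB : IsKrausFamily B) (ψ : nA × nB → ℂ) :
    ∑ k, ptraceB (pureState (((1 : Matrix nA nA ℂ) ⊗ₖ B k) *ᵥ ψ)) = ptraceB (pureState ψ) := by
  have hT : ∑ k, (B k)ᵀ * ((B k)ᵀ)ᴴ = 1 := by
    have h := congrArg transpose hB
    rw [transpose_sum, transpose_one] at h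
    rw [← h]
    refine Finset.sum_congr rfl fun k _ => ?_
    rw [transpose_mul]
    rfl
  simp only [ptraceB_pureState, coeffMatrix_one_kronecker]
  calc ∑ k, coeffMatrix ψ * (B k)ᵀ * (coeffMatrix ψ * (B k)ᵀ)ᴴ
      = coeffMatrix ψ * (∑ k, (B k)ᵀ * ((B k)ᵀ)ᴴ) * (coeffMatrix ψ)ᴴ := by
        rw [Matrix.mul_sum, Matrix.sum_mul]
        refine Finset.sum_congr rfl fun k _ => ?_
        rw [conjTranspose_mul]
        simp only [Matrix.mul_assoc]
    _ = _ := by rw [hT, Matrix.mul_one]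

/-! ### The convex roof -/

/-- The set of ensemble averages whose infimum is `Ecr S ρ`. -/
def ensembleValues (S : SFam) {nA nB : Type} [Fintype nA] [DecidableEq nA] [Fintype nB]
    [DecidableEq nB] (ρ : Matrix (nA × nB) (nA × nB) ℂ) : Set ℝ :=
  { r : ℝ | ∃ (M : ℕ) (P : Fin M → ℝ) (Ψ : Fin M → nA × nB → ℂ),
    (∀ m, 0 ≤ P m) ∧ (∀ m, star (Ψ m) ⬝ᵥ Ψ m = 1) ∧
    (∑ m, P m • pureState (Ψ m)) = ρ ∧
    r = ∑ m, P m * S nA (ptraceB (pureState (Ψ m))) }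

lemma mem_ensembleValues (S : SFam) {nA nB ι : Type} [Fintype nA] [DecidableEq nA] [Fintype nB]
    [DecidableEq nB] [Fintype ι] (P : ι → ℝ) (Ψ : ι → nA × nB → ℂ)
    (hP : ∀ m, 0 ≤ P m) (hΨ : ∀ m, star (Ψ m) ⬝ᵥ Ψ m = 1) :
    ∑ m, P m * S nA (ptraceB (pureState (Ψ m))) ∈
      ensembleValues S (∑ m, P m • pureState (Ψ m)) := by
  let e := (Fintype.equivFin ι).symm
  refine ⟨Fintype.card ι, P ∘ e, Ψ ∘ e, fun m => hP _, fun m => hΨ _, ?_, ?_⟩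
  · exact Equiv.sum_comp e fun m => P m • pureState (Ψ m)
  · exact (Equiv.sum_comp e fun m => P m * S nA (ptraceB (pureState (Ψ m)))).symm

lemma ensembleValues_nonneg {S : SFam}
    (hnonneg : ∀ (n : Type) [Fintype n] [DecidableEq n] (σ : Matrix n n ℂ),
      IsDensityMatrix σ → 0 ≤ S n σ)
    {nA nB : Type} [Fintype nA] [DecidableEq nA] [Fintype nB] [DecidableEq nB]
    {ρ : Matrix (nA × nB) (nA × nB) ℂ} {r : ℝ}
    (hr : r ∈ ensembleValues S ρ) : 0 ≤ r := by
  obtain ⟨M, P, Ψ, hP, hΨ, -, rfl⟩ := hr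
  exact Finset.sum_nonneg fun m _ =>
    mul_nonneg (hP m) (hnonneg _ _ (isDensityMatrix_ptraceB (hΨ m)))

lemma Ecr_le_of_mem {S : SFam}
    (hnonneg : ∀ (n : Type) [Fintype n] [DecidableEq n] (σ : Matrix n n ℂ),
      IsDensityMatrix σ → 0 ≤ S n σ)
    {nA nB : Type} [Fintype nA] [DecidableEq nA] [Fintype nB] [DecidableEq nB]
    {ρ : Matrix (nA × nB) (nA × nB) ℂ} {r : ℝ}
    (hr : r ∈ ensembleValues S ρ) : Ecr S ρ ≤ r :=
  csInf_le ⟨0, fun _ hx => ensembleValues_nonneg hnonneg hx⟩ hr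

lemma Ecr_nonneg {S : SFam}
    (hnonneg : ∀ (n : Type) [Fintype n] [DecidableEq n] (σ : Matrix n n ℂ),
      IsDensityMatrix σ → 0 ≤ S n σ)
    {nA nB : Type} [Fintype nA] [DecidableEq nA] [Fintype nB] [DecidableEq nB]
    (ρ : Matrix (nA × nB) (nA × nB) ℂ) : 0 ≤ Ecr S ρ :=
  Real.sInf_nonneg fun _ hx => ensembleValues_nonneg hnonneg hx

open scoped MatrixOrder Matrix.Norms.L2Operator in
lemma exists_conjTranspose_mul_self {n : Type} [Fintype n] [DecidableEq n] {ρ : Matrix n n ℂ}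
    (hρ : ρ.PosSemidef) : ∃ C : Matrix n n ℂ, ρ = Cᴴ * C :=
  CStarAlgebra.nonneg_iff_eq_star_mul_self.mp hρ.nonneg

/-- Every state has a pure-state ensemble: factor `ρ = Cᴴ * C` and normalize the conjugated rows
of `C`. -/
lemma ensembleValues_nonempty (S : SFam) {nA nB : Type} [Fintype nA] [DecidableEq nA]
    [Fintype nB] [DecidableEq nB] {ρ : Matrix (nA × nB) (nA × nB) ℂ}
    (hρ : IsDensityMatrix ρ) : (ensembleValues S ρ).Nonempty := by
  have : Nonempty (nA × nB) := by
    by_contra h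
    rw [not_nonempty_iff] at h
    have := hρ.2
    simp [trace] at this
  obtain ⟨C, hC⟩ := exists_conjTranspose_mul_self hρ.1
  choose c u hc hu hcu using fun i => exists_normalized (star (C i))
  have hsum : ∑ i, c i • pureState (u i) = ρ := by
    simp only [← hcu]
    rw [hC]
    ext x y
    simp [pureState, Matrix.sum_apply, vecMulVec_apply, mul_apply]
  exact ⟨_, hsum ▸ mem_ensembleValues S c u hc hu⟩

/-- Concavity for mixtures indexed by an arbitrary finite type. -/
lemma concave_fintype {S : SFam}
    (hconcave : ∀ (n : Type) [Fintype n] [DecidableEq n] (M : ℕ) (P : Fin M → ℝ)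
      (σ : Fin M → Matrix n n ℂ), (∀ m, 0 ≤ P m) → (∑ m, P m) = 1 →
      (∀ m, IsDensityMatrix (σ m)) →
      ∑ m, P m * S n (σ m) ≤ S n (∑ m, P m • σ m))
    {n K : Type} [Fintype n] [DecidableEq n] [Fintype K] (P : K → ℝ) (σ : K → Matrix n n ℂ)
    (hP : ∀ k, 0 ≤ P k) (hP1 : ∑ k, P k = 1) (hσ : ∀ k, IsDensityMatrix (σ k)) :
    ∑ k, P k * S n (σ k) ≤ S n (∑ k, P k • σ k) := by
  let e := (Fintype.equivFin K).symm
  have h := hconcave n (Fintype.card K) (P ∘ e) (σ ∘ e) (fun m => hP _)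
    ((Equiv.sum_comp e P).trans hP1) (fun m => hσ _)
  have h1 := Equiv.sum_comp e fun k => P k * S n (σ k)
  have h2 := Equiv.sum_comp e fun k => P k • σ k
  rw [← h1, ← h2]
  exact h

/-- For nonnegative concave local functions `S_d`, the convex roof
satisfies `∑ₖ pₖ E^{cr}(ρₖ) ≤ E^{cr}(ρ)` for every Kraus family `{Bₖ}` acting on B
(where `pₖ = tr((1⊗Bₖ)ρ(1⊗Bₖ)†)` and `ρₖ` the corresponding normalized post-measurement
states, terms with `pₖ = 0` omitted), and `E^{cr}` is convex. -/
theorem statement_9 (S : SFam)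
    (hnonneg : ∀ (n : Type) [Fintype n] [DecidableEq n] (σ : Matrix n n ℂ),
      IsDensityMatrix σ → 0 ≤ S n σ)
    (hconcave : ∀ (n : Type) [Fintype n] [DecidableEq n] (M : ℕ) (P : Fin M → ℝ)
      (σ : Fin M → Matrix n n ℂ), (∀ m, 0 ≤ P m) → (∑ m, P m) = 1 →
      (∀ m, IsDensityMatrix (σ m)) →
      ∑ m, P m * S n (σ m) ≤ S n (∑ m, P m • σ m)) :
    (∀ (nA nB nB' K : Type) [Fintype nA] [DecidableEq nA] [Fintype nB] [DecidableEq nB]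
      [Fintype nB'] [DecidableEq nB'] [Fintype K]
      (B : K → Matrix nB' nB ℂ), IsKrausFamily B →
      ∀ ρ : Matrix (nA × nB) (nA × nB) ℂ, IsDensityMatrix ρ →
      ∑ k ∈ Finset.univ.filter (fun k : K =>
          (((((1 : Matrix nA nA ℂ) ⊗ₖ B k) * ρ * ((1 : Matrix nA nA ℂ) ⊗ₖ B k)ᴴ)).trace.re ≠ 0)),
        ((((1 : Matrix nA nA ℂ) ⊗ₖ B k) * ρ * ((1 : Matrix nA nA ℂ) ⊗ₖ B k)ᴴ)).trace.re *
          Ecr S (((((1 : Matrix nA nA ℂ) ⊗ₖ B k) * ρ *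
            ((1 : Matrix nA nA ℂ) ⊗ₖ B k)ᴴ)).trace.re⁻¹ •
            (((1 : Matrix nA nA ℂ) ⊗ₖ B k) * ρ * ((1 : Matrix nA nA ℂ) ⊗ₖ B k)ᴴ))
        ≤ Ecr S ρ) ∧
    (∀ (nA nB K : Type) [Fintype nA] [DecidableEq nA] [Fintype nB] [DecidableEq nB]
      [Fintype K] (q : K → ℝ) (σ : K → Matrix (nA × nB) (nA × nB) ℂ),
      (∀ k, 0 ≤ q k) → (∑ k, q k) = 1 → (∀ k, IsDensityMatrix (σ k)) →
      Ecr S (∑ k, q k • σ k) ≤ ∑ k, q k * Ecr S (σ k)) := by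
  refine ⟨?_, ?_⟩
  · intro nA nB nB' K _ _ _ _ _ _ _ B hB ρ hρ
    -- If the output space is zero-dimensional, every outcome has probability zero.
    rcases isEmpty_or_nonempty (nA × nB') with hE | hN
    · rw [Finset.filter_false_of_mem (by intro k _; simp [trace]), Finset.sum_empty]
      exact Ecr_nonneg hnonneg ρ
    refine le_csInf (ensembleValues_nonempty S hρ) ?_
    rintro r ⟨M, P, Ψ, hP, hΨ, rfl, rfl⟩
    choose c u hc hu hcu using fun (k : K) (m : Fin M) =>
      exists_normalized (((1 : Matrix nA nA ℂ) ⊗ₖ B k) *ᵥ Ψ m)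
    have hpost : ∀ k, ((1 : Matrix nA nA ℂ) ⊗ₖ B k) * (∑ m, P m • pureState (Ψ m)) *
        ((1 : Matrix nA nA ℂ) ⊗ₖ B k)ᴴ = ∑ m, (P m * c k m) • pureState (u k m) := by
      intro k
      rw [Matrix.mul_sum, Matrix.sum_mul]
      refine Finset.sum_congr rfl fun m _ => ?_
      rw [Matrix.mul_smul, Matrix.smul_mul, mul_pureState_mul, hcu, smul_smul]
    have hprob : ∀ k, (∑ m, (P m * c k m) • pureState (u k m)).trace.re
        = ∑ m, P m * c k m := by
      intro k
      simp [trace_sum, trace_smul, pureState_trace, hu]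
    simp only [hpost, hprob]
    have hterm : ∀ k, (∑ m, P m * c k m) ≠ 0 →
        (∑ m, P m * c k m) * Ecr S ((∑ m, P m * c k m)⁻¹ •
          ∑ m, (P m * c k m) • pureState (u k m))
        ≤ ∑ m, P m * c k m * S nA (ptraceB (pureState (u k m))) := by
      intro k hk
      have hp : 0 ≤ ∑ m, P m * c k m :=
        Finset.sum_nonneg fun m _ => mul_nonneg (hP m) (hc k m)
      generalize (∑ m, P m * c k m) = p at hk hp
      have hmem := mem_ensembleValues S (fun m => p⁻¹ * (P m * c k m)) (u k)
        (fun m => mul_nonneg (inv_nonneg.mpr hp) (mul_nonneg (hP m) (hc k m))) (hu k)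
      simp only [← smul_smul p⁻¹, ← Finset.smul_sum] at hmem
      refine (mul_le_mul_of_nonneg_left (Ecr_le_of_mem hnonneg hmem) hp).trans_eq ?_
      rw [Finset.mul_sum]
      refine Finset.sum_congr rfl fun m _ => ?_
      field_simp
    have hred : ∀ m, ∑ k, c k m • ptraceB (pureState (u k m)) = ptraceB (pureState (Ψ m)) := by
      intro m
      rw [← sum_ptraceB_kraus hB (Ψ m)]
      simp only [hcu, ptraceB_smul]
    have hcsum : ∀ m, ∑ k, c k m = 1 := by
      intro m
      have h := congrArg trace (hred m)
      simp only [trace_sum, trace_smul, ptraceB_trace, pureState_trace, hu, hΨ,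
        Complex.real_smul, mul_one] at h
      exact_mod_cast h
    calc _ ≤ ∑ k ∈ Finset.univ.filter (fun k : K => (∑ m, P m * c k m) ≠ 0),
            ∑ m, P m * c k m * S nA (ptraceB (pureState (u k m))) :=
          Finset.sum_le_sum fun k hk => hterm k (Finset.mem_filter.mp hk).2
      _ ≤ ∑ k, ∑ m, P m * c k m * S nA (ptraceB (pureState (u k m))) :=
          Finset.sum_le_sum_of_subset_of_nonneg (Finset.filter_subset _ _) fun k _ _ =>
            Finset.sum_nonneg fun m _ => mul_nonneg (mul_nonneg (hP m) (hc k m))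
              (hnonneg _ _ (isDensityMatrix_ptraceB (hu k m)))
      _ = ∑ m, P m * ∑ k, c k m * S nA (ptraceB (pureState (u k m))) := by
          rw [Finset.sum_comm]
          simp only [Finset.mul_sum, mul_assoc]
      _ ≤ ∑ m, P m * S nA (ptraceB (pureState (Ψ m))) := by
          refine Finset.sum_le_sum fun m _ => mul_le_mul_of_nonneg_left ?_ (hP m)
          rw [← hred m]
          exact concave_fintype hconcave (fun k => c k m) _ (fun k => hc k m) (hcsum m)
            fun k => isDensityMatrix_ptraceB (hu k m)
  · intro nA nB K _ _ _ _ _ q σ hq hq1 hσ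
    refine le_of_forall_pos_le_add fun ε hε => ?_
    have hex : ∀ k, ∃ r ∈ ensembleValues S (σ k), r < Ecr S (σ k) + ε := fun k =>
      exists_lt_of_csInf_lt (ensembleValues_nonempty S (hσ k)) (lt_add_of_pos_right _ hε)
    choose r hr hrε using hex
    choose M P Ψ hP hΨ hsum hrval using hr
    -- The union of the chosen ensembles, with weights `q k * P k m`, is an ensemble of the mixture.
    have hmem := mem_ensembleValues S (ι := Σ k, Fin (M k)) (fun x => q x.1 * P x.1 x.2)
      (fun x => Ψ x.1 x.2) (fun x => mul_nonneg (hq _) (hP _ _)) (fun x => hΨ _ _)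
    have hmix : ∑ x : Σ k, Fin (M k), (q x.1 * P x.1 x.2) • pureState (Ψ x.1 x.2)
        = ∑ k, q k • σ k := by
      rw [Fintype.sum_sigma]
      refine Finset.sum_congr rfl fun k _ => ?_
      simp only [← hsum k, Finset.smul_sum, smul_smul]
    have hval : ∑ x : Σ k, Fin (M k), q x.1 * P x.1 x.2 *
        S nA (ptraceB (pureState (Ψ x.1 x.2))) = ∑ k, q k * r k := by
      rw [Fintype.sum_sigma]
      refine Finset.sum_congr rfl fun k _ => ?_
      simp only [hrval k, Finset.mul_sum, mul_assoc]
    rw [hmix, hval] at hmem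
    calc Ecr S (∑ k, q k • σ k) ≤ ∑ k, q k * r k := Ecr_le_of_mem hnonneg hmem
      _ ≤ ∑ k, q k * (Ecr S (σ k) + ε) :=
          Finset.sum_le_sum fun k _ => mul_le_mul_of_nonneg_left (hrε k).le (hq k)
      _ = ∑ k, q k * Ecr S (σ k) + ε := by
          simp only [mul_add, Finset.sum_add_distrib, ← Finset.sum_mul, hq1, one_mul]

end
end

section
/- Let C be a real-valued function on states of d_0-level systems that is convex, depends only on the decreasing eigenvalue vector p of the state via a function c with c(q) ≥ c(p) whenever q majorizes p, and has maximal value C^max (attained on pure states). Define S^{lc}(σ) = C^max − C(σ) on states of d_0-level systems and let E be the convex roof of the associated family S^{lc}_d. Then for every state ρ of a composite system AB with A of dimension d_0 and reduced state ρ_A = tr_B ρ, the monogamy inequality E(ρ) + C(ρ_A) ≤ C^max holds. In particular, if E(ρ) ≥ C^max − 1 then C(ρ_A) ≤ 1. -/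
/-! Take the spectral ensemble of `ρ`: eigenvalues `Pₘ` and eigenvectors `Ψₘ`. With
`σₘ = tr_B |Ψₘ⟩⟨Ψₘ|`, linearity of the partial trace gives `ρ_A = ∑ₘ Pₘ σₘ`, so convexity of `C`
yields `∑ₘ Pₘ (Cmax − C(σₘ)) ≤ Cmax − C(ρ_A)`. The convex roof is an infimum over ensembles of
nonnegative values, hence is at most the value at this particular ensemble. The lemmas carrying
the argument are `exists_pure_ensemble` and `isDensityMatrix_ptraceB_pureState`. -/

open Matrix
open scoped ComplexOrder Kronecker Classical

noncomputable section

/-- `q` majorizes `p` (vectors on `Fin n`, both in decreasing order). -/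
def VecMajorizes {n : ℕ} (q p : Fin n → ℝ) : Prop :=
  (∀ k : ℕ, ∑ i : Fin n, (if (i : ℕ) < k then p i else 0) ≤
    ∑ i : Fin n, (if (i : ℕ) < k then q i else 0)) ∧
  (∑ i, p i) = ∑ i, q i

/-- With `A i b = ψ (i, b)` the reduced state is `A * Aᴴ`, hence positive semidefinite. -/
theorem isDensityMatrix_ptraceB_pureState {nA nB : Type} [Fintype nA] [Fintype nB]
    (ψ : nA × nB → ℂ) (hψ : star ψ ⬝ᵥ ψ = 1) :
    IsDensityMatrix (ptraceB (pureState ψ)) := by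
  constructor
  · have h : ptraceB (pureState ψ) =
        (Matrix.of fun i b => ψ (i, b)) * (Matrix.of fun i b => ψ (i, b))ᴴ := by
      ext i j
      simp [ptraceB, pureState, Matrix.mul_apply, Matrix.vecMulVec_apply]
    rw [h]
    exact Matrix.posSemidef_self_mul_conjTranspose _
  · rw [← hψ]
    simp [ptraceB, pureState, Matrix.trace, Matrix.vecMulVec_apply, dotProduct,
      Fintype.sum_prod_type, mul_comm]

theorem ptraceB_sum_smul {nA nB : Type} [Fintype nB] {M : ℕ} (P : Fin M → ℝ)
    (σ : Fin M → Matrix (nA × nB) (nA × nB) ℂ) :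
    ptraceB (∑ m, P m • σ m) = ∑ m, P m • ptraceB (σ m) := by
  ext i j
  simp only [ptraceB, Matrix.of_apply, Matrix.sum_apply, Matrix.smul_apply, Finset.smul_sum]
  exact Finset.sum_comm

/-- Every state is a finite convex mixture of pure states (its spectral decomposition). -/
theorem exists_pure_ensemble {n : Type} [Fintype n] [DecidableEq n] (ρ : Matrix n n ℂ)
    (hρ : IsDensityMatrix ρ) :
    ∃ (M : ℕ) (P : Fin M → ℝ) (Ψ : Fin M → n → ℂ),
      (∀ m, 0 ≤ P m) ∧ (∑ m, P m = 1) ∧ (∀ m, star (Ψ m) ⬝ᵥ Ψ m = 1) ∧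
      (∑ m, P m • pureState (Ψ m)) = ρ := by
  have hH : ρ.IsHermitian := hρ.1.1
  let e := (Fintype.equivFin n).symm
  let U : Matrix n n ℂ := hH.eigenvectorUnitary
  have hU : star U * U = 1 := Unitary.coe_star_mul_self hH.eigenvectorUnitary
  refine ⟨Fintype.card n, fun m => hH.eigenvalues (e m), fun m i => U i (e m),
    fun m => hρ.1.eigenvalues_nonneg _, ?_, fun m => ?_, ?_⟩
  · rw [Equiv.sum_comp e hH.eigenvalues]
    have h := hH.trace_eq_sum_eigenvalues
    rw [hρ.2] at h
    exact Complex.ofReal_injective (by simpa using h.symm)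
  · have h := congrFun (congrFun hU (e m)) (e m)
    simpa [Matrix.mul_apply, dotProduct, Matrix.star_apply] using h
  · rw [Equiv.sum_comp e (fun k => hH.eigenvalues k • pureState (fun i => U i k))]
    ext i j
    have h := congrFun (congrFun hH.spectral_theorem i) j
    rw [h]
    rw [Unitary.conjStarAlgAut_apply, Matrix.mul_apply]
    simp only [Matrix.mul_diagonal, Matrix.sum_apply, Matrix.smul_apply, pureState,
      Matrix.vecMulVec_apply, Matrix.star_apply, Pi.star_apply, Function.comp_apply]
    refine Finset.sum_congr rfl fun k _ => ?_
    simp only [Complex.real_smul, U]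
    simp
    ring

/-- Monogamy of entanglement and local contextuality. Let `C` be a
convex, Schur-convex (via `c` on the decreasing spectrum) function on states of a
`d₀`-level system with maximal value `Cmax` attained on pure states, let the family `Slc`
be the spectrum-determined extension of `Cmax − C`, and let `E` be its convex roof. Then
for every state `ρ` of a composite system AB with A of dimension `d₀`,
`E(ρ) + C(ρ_A) ≤ Cmax`; in particular `Cmax − 1 ≤ E(ρ)` forces `C(ρ_A) ≤ 1`. -/
theorem statement_12 (d0 : ℕ) (C : Matrix (Fin d0) (Fin d0) ℂ → ℝ)
    (c : (Fin d0 → ℝ) → ℝ) (Cmax : ℝ) (Slc : SFam) (s : List ℝ → ℝ)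
    (hCconvex : ∀ (M : ℕ) (P : Fin M → ℝ) (σ : Fin M → Matrix (Fin d0) (Fin d0) ℂ),
      (∀ m, 0 ≤ P m) → (∑ m, P m) = 1 → (∀ m, IsDensityMatrix (σ m)) →
      C (∑ m, P m • σ m) ≤ ∑ m, P m * C (σ m))
    (hCc : ∀ (σ : Matrix (Fin d0) (Fin d0) ℂ) (hσ : IsDensityMatrix σ),
      C σ = c (eigDesc hσ.1.1))
    (hSchur : ∀ p q : Fin d0 → ℝ, (∀ i, 0 ≤ p i) → (∀ i, 0 ≤ q i) →
      (∀ i j, i ≤ j → p j ≤ p i) → (∀ i j, i ≤ j → q j ≤ q i) →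
      (∑ i, p i) = 1 → (∑ i, q i) = 1 → VecMajorizes q p → c p ≤ c q)
    (hCmax : ∀ σ : Matrix (Fin d0) (Fin d0) ℂ, IsDensityMatrix σ → C σ ≤ Cmax)
    (hattain : ∀ σ : Matrix (Fin d0) (Fin d0) ℂ, IsDensityMatrix σ → IsPureState σ →
      C σ = Cmax)
    (hspec : ∀ (n : Type) [Fintype n] [DecidableEq n] (σ : Matrix n n ℂ)
      (hσ : IsDensityMatrix σ), Slc n σ = s (nonzeroEigListDesc hσ.1.1))
    (hagree : ∀ σ : Matrix (Fin d0) (Fin d0) ℂ, IsDensityMatrix σ →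
      Slc (Fin d0) σ = Cmax - C σ)
    (nB : Type) [Fintype nB] [DecidableEq nB]
    (ρ : Matrix (Fin d0 × nB) (Fin d0 × nB) ℂ) (hρ : IsDensityMatrix ρ) :
    Ecr Slc ρ + C (ptraceB ρ) ≤ Cmax ∧
    (Cmax - 1 ≤ Ecr Slc ρ → C (ptraceB ρ) ≤ 1) := by
  have key : Ecr Slc ρ + C (ptraceB ρ) ≤ Cmax := by
    obtain ⟨M, P, Ψ, hP, hP1, hΨ, hsum⟩ := exists_pure_ensemble ρ hρ
    have hdens : ∀ m, IsDensityMatrix (ptraceB (pureState (Ψ m))) := fun m =>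
      isDensityMatrix_ptraceB_pureState _ (hΨ m)
    have hle : Ecr Slc ρ ≤ ∑ m, P m * Slc (Fin d0) (ptraceB (pureState (Ψ m))) := by
      refine csInf_le ⟨0, ?_⟩ ⟨M, P, Ψ, hP, hΨ, hsum, rfl⟩
      rintro r ⟨M', P', Ψ', hP', hΨ', -, rfl⟩
      refine Finset.sum_nonneg fun m _ => mul_nonneg (hP' m) ?_
      have hd := isDensityMatrix_ptraceB_pureState _ (hΨ' m)
      rw [hagree _ hd]
      exact sub_nonneg.2 (hCmax _ hd)
    have hconv := hCconvex M P _ hP hP1 hdens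
    rw [← ptraceB_sum_smul, hsum] at hconv
    have hval : ∑ m, P m * Slc (Fin d0) (ptraceB (pureState (Ψ m))) =
        Cmax - ∑ m, P m * C (ptraceB (pureState (Ψ m))) := by
      simp only [fun m => hagree _ (hdens m), mul_sub, Finset.sum_sub_distrib,
        ← Finset.sum_mul, hP1, one_mul]
    linarith
  exact ⟨key, fun h => by linarith⟩

end
end

section
/- Let A_1, A_2, A_3, A_4 be Hermitian involutions (A_k† = A_k, A_k² = I) on a finite-dimensional Hilbert space with [A_1,A_2] = [A_2,A_3] = [A_3,A_4] = [A_4,A_1] = 0, and set T = A_1(A_2 + A_4) + A_3(A_2 − A_4). Then T² = 4I − [A_1,A_3][A_2,A_4]. Consequently: (i) the operator norm of T is at most 2√2, so tr(ρT) ≤ 2√2 for every state ρ (Tsirelson bound for this commuting-observables CHSH operator); (ii) if [A_1,A_3][A_2,A_4] = 0, then T² = 4I, every eigenvalue of T is ±2, and tr(ρT) ≤ 2 for every state ρ. -/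
/-!
Expanding the square, using that `A₁` and `A₃` commute with `A₂` and `A₄`, gives
`T² = 4 - [A₁,A₃][A₂,A₄]` (`chsh_sq`). Exchanging `A₁` and `A₃` flips the sign of the
commutator term, so the companion operator `S = A₃(A₂+A₄) + A₁(A₂-A₄)` satisfies
`T² + S² = 8`. Both `T` and `S` are Hermitian, hence `T² ≤ 8`. This gives the norm bound, since
`‖Tx‖² + ‖Sx‖² = 8‖x‖²`, and also the bound on states, since `0 ≤ (T - c)²` yields
`2c tr(ρT) ≤ tr(ρT²) + c² ≤ 2c²` with `c = 2√2`. When the commutator product vanishes, `T² = 4`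
and the same argument applies with `c = 2` and `S = 0`.
-/

open Matrix
open scoped ComplexOrder

noncomputable section

section

variable {n : Type} [Fintype n]

/-- With `B = A₂ + A₄` and `C = A₂ - A₄`, both commuting with `A₁` and `A₃`, the square is
`B² + C² + A₁A₃BC + A₃A₁CB`, where `B² + C² = 4` and `CB = -BC = [A₂,A₄]`. -/
lemma chsh_sq [DecidableEq n] {A₁ A₂ A₃ A₄ : Matrix n n ℂ}
    (hi₁ : A₁ * A₁ = 1) (hi₂ : A₂ * A₂ = 1) (hi₃ : A₃ * A₃ = 1) (hi₄ : A₄ * A₄ = 1)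
    (c₁₂ : Commute A₁ A₂) (c₂₃ : Commute A₂ A₃) (c₃₄ : Commute A₃ A₄) (c₄₁ : Commute A₄ A₁) :
    (A₁ * (A₂ + A₄) + A₃ * (A₂ - A₄)) * (A₁ * (A₂ + A₄) + A₃ * (A₂ - A₄)) =
      (4 : ℂ) • (1 : Matrix n n ℂ) - (A₁ * A₃ - A₃ * A₁) * (A₂ * A₄ - A₄ * A₂) := by
  have hB₁ : Commute (A₂ + A₄) A₁ := c₁₂.symm.add_left c₄₁
  have hB₃ : Commute (A₂ + A₄) A₃ := c₂₃.add_left c₃₄.symm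
  have hC₁ : Commute (A₂ - A₄) A₁ := c₁₂.symm.sub_left c₄₁
  have hC₃ : Commute (A₂ - A₄) A₃ := c₂₃.sub_left c₃₄.symm
  have hBB : (A₂ + A₄) * (A₂ + A₄) + (A₂ - A₄) * (A₂ - A₄) = (4 : ℂ) • 1 := by
    simp only [add_mul, mul_add, sub_mul, mul_sub, hi₂, hi₄]
    module
  have hBC : (A₂ + A₄) * (A₂ - A₄) = -(A₂ * A₄ - A₄ * A₂) := by
    simp only [add_mul, mul_sub, hi₂, hi₄]
    abel
  have hCB : (A₂ - A₄) * (A₂ + A₄) = A₂ * A₄ - A₄ * A₂ := by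
    simp only [sub_mul, mul_add, hi₂, hi₄]
    abel
  rw [add_mul (A₁ * _), mul_add (A₁ * _), mul_add (A₃ * _), hB₁.mul_mul_mul_comm, hB₃.mul_mul_mul_comm,
    hC₁.mul_mul_mul_comm, hC₃.mul_mul_mul_comm, hi₁, hi₃, hBC, hCB, ← hBB]
  simp only [one_mul, sub_mul, mul_neg]
  abel

lemma chsh_isHermitian {A₁ A₂ A₃ A₄ : Matrix n n ℂ}
    (h₁ : A₁.IsHermitian) (h₂ : A₂.IsHermitian) (h₃ : A₃.IsHermitian) (h₄ : A₄.IsHermitian)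
    (c₁₂ : Commute A₁ A₂) (c₂₃ : Commute A₂ A₃) (c₃₄ : Commute A₃ A₄) (c₄₁ : Commute A₄ A₁) :
    (A₁ * (A₂ + A₄) + A₃ * (A₂ - A₄)).IsHermitian := by
  refine .add ?_ ?_
  · exact (IsHermitian.commute_iff h₁ (h₂.add h₄)).1 (c₁₂.add_right c₄₁.symm)
  · exact (IsHermitian.commute_iff h₃ (h₂.sub h₄)).1 (c₂₃.symm.sub_right c₃₄)

/-- If `T² + S² = c²` with `T`, `S` Hermitian, then `‖Tx‖² + ‖Sx‖² = c²‖x‖²`, so `‖T‖ ≤ c`. -/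
lemma norm_le_of_sq_add_sq [DecidableEq n] {T S : Matrix n n ℂ}
    (hT : T.IsHermitian) (hS : S.IsHermitian) {c : ℝ} (hc : 0 ≤ c)
    (h : T * T + S * S = ((c ^ 2 : ℝ) : ℂ) • (1 : Matrix n n ℂ)) :
    ‖Matrix.toEuclideanCLM (𝕜 := ℂ) T‖ ≤ c := by
  refine ContinuousLinearMap.opNorm_le_bound _ hc fun x => ?_
  have key : ∀ M : Matrix n n ℂ, M.IsHermitian →
      ((‖Matrix.toEuclideanCLM (𝕜 := ℂ) M x‖ ^ 2 : ℝ) : ℂ) =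
        inner ℂ x (Matrix.toEuclideanCLM (𝕜 := ℂ) (M * M) x) := by
    intro M hM
    have hM' : ContinuousLinearMap.adjoint (Matrix.toEuclideanCLM (𝕜 := ℂ) M) =
        Matrix.toEuclideanCLM (𝕜 := ℂ) M := by
      rw [← ContinuousLinearMap.star_eq_adjoint, ← map_star, star_eq_conjTranspose, hM.eq]
    rw [map_mul, mul_apply_eq_comp, ← ContinuousLinearMap.adjoint_inner_left, hM',
      inner_self_eq_norm_sq_to_K]
    simp
  have hsum : ‖Matrix.toEuclideanCLM (𝕜 := ℂ) T x‖ ^ 2 +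
      ‖Matrix.toEuclideanCLM (𝕜 := ℂ) S x‖ ^ 2 = (c * ‖x‖) ^ 2 := by
    apply Complex.ofReal_injective
    rw [Complex.ofReal_add, key T hT, key S hS, ← inner_add_right, ← _root_.add_apply,
      ← map_add, h, map_smul, map_one, _root_.smul_apply,
      one_apply_eq_self, inner_smul_right, inner_self_eq_norm_sq_to_K]
    simp [mul_pow]
  refine le_of_sq_le_sq ?_ (by positivity)
  nlinarith [sq_nonneg ‖Matrix.toEuclideanCLM (𝕜 := ℂ) S x‖]

lemma trace_mul_sq_nonneg {ρ M : Matrix n n ℂ} (hρ : ρ.PosSemidef) (hM : M.IsHermitian) :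
    0 ≤ ((ρ * (M * M)).trace).re := by
  have h := (hρ.mul_mul_conjTranspose_same M).trace_nonneg
  rw [hM.eq, Matrix.mul_assoc, Matrix.trace_mul_comm, Matrix.mul_assoc] at h
  exact (Complex.le_def.1 h).1

/-- If `T² + S² = c²` with `T`, `S` Hermitian, then `tr(ρT) ≤ c` on states: for `c > 0`, the
sum of `tr(ρ(T - c)²) ≥ 0` and `tr(ρS²) ≥ 0` equals `2c² - 2c tr(ρT)`. -/
lemma trace_mul_le_of_sq_add_sq [DecidableEq n] {T S ρ : Matrix n n ℂ}
    (hT : T.IsHermitian) (hS : S.IsHermitian) {c : ℝ} (hc : 0 < c)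
    (h : T * T + S * S = ((c ^ 2 : ℝ) : ℂ) • (1 : Matrix n n ℂ)) (hρ : IsDensityMatrix ρ) :
    ((ρ * T).trace).re ≤ c := by
  have hTc : (T - (c : ℂ) • (1 : Matrix n n ℂ)).IsHermitian := by
    refine hT.sub ?_
    simp [IsHermitian, conjTranspose_smul]
  have h1 := trace_mul_sq_nonneg hρ.1 hTc
  have h2 := trace_mul_sq_nonneg hρ.1 hS
  have h3 : (T - (c : ℂ) • (1 : Matrix n n ℂ)) * (T - (c : ℂ) • (1 : Matrix n n ℂ)) + S * S =
      ((2 * c ^ 2 : ℝ) : ℂ) • (1 : Matrix n n ℂ) - ((2 * c : ℝ) : ℂ) • T := by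
    have : (T - (c : ℂ) • (1 : Matrix n n ℂ)) * (T - (c : ℂ) • (1 : Matrix n n ℂ)) + S * S =
        (T * T + S * S) + ((c : ℂ) * c) • (1 : Matrix n n ℂ) - ((2 * c : ℝ) : ℂ) • T := by
      simp only [sub_mul, mul_sub, smul_mul_assoc, mul_smul_comm, one_mul, mul_one]
      push_cast
      module
    rw [this, h]
    push_cast
    module
  have h4 : 0 ≤ ((ρ * (((2 * c ^ 2 : ℝ) : ℂ) • (1 : Matrix n n ℂ) -
      ((2 * c : ℝ) : ℂ) • T)).trace).re := by
    rw [← h3, mul_add, trace_add, Complex.add_re]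
    exact add_nonneg h1 h2
  rw [mul_sub, mul_smul_comm, mul_smul_comm, mul_one, trace_sub, trace_smul, trace_smul, hρ.2,
    Complex.sub_re, smul_eq_mul, smul_eq_mul, Complex.re_ofReal_mul, Complex.re_ofReal_mul,
    Complex.one_re] at h4
  nlinarith

lemma spectrum_subset_of_sq_eq_four [DecidableEq n] {T : Matrix n n ℂ}
    (h : T * T = (4 : ℂ) • (1 : Matrix n n ℂ)) : spectrum ℂ T ⊆ {-2, 2} := by
  intro μ hμ
  by_contra hne
  have hμ4 : μ ^ 2 - 4 ≠ 0 := by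
    intro h0
    have : (μ + 2) * (μ - 2) = 0 := by linear_combination h0
    rcases mul_eq_zero.1 this with h' | h'
    · exact hne (Or.inl (eq_neg_of_add_eq_zero_left h'))
    · exact hne (Or.inr (sub_eq_zero.1 h'))
  refine hμ ?_
  -- `(μ - T)(μ + T) = μ² - 4` is an invertible scalar.
  refine IsUnit.of_mul_eq_one ((μ ^ 2 - 4)⁻¹ • (μ • (1 : Matrix n n ℂ) + T)) ?_
  have hmul : (μ • (1 : Matrix n n ℂ) - T) * (μ • (1 : Matrix n n ℂ) + T) =
      (μ ^ 2 - 4) • (1 : Matrix n n ℂ) := by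
    simp only [sub_mul, mul_add, smul_mul_assoc, mul_smul_comm, one_mul, mul_one, h]
    module
  rw [Algebra.algebraMap_eq_smul_one, mul_smul_comm, hmul, smul_smul, inv_mul_cancel₀ hμ4, one_smul]

end

/-- For Hermitian involutions `A₁,…,A₄` with cyclically commuting
neighbours, the CHSH operator `T = A₁(A₂+A₄) + A₃(A₂−A₄)` satisfies
`T² = 4·1 − [A₁,A₃][A₂,A₄]`; hence `‖T‖ ≤ 2√2` in operator norm and
`tr(ρT) ≤ 2√2` for every state `ρ` (Tsirelson bound), while if `[A₁,A₃][A₂,A₄] = 0`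
then `T² = 4·1`, every spectral value of `T` is `±2`, and `tr(ρT) ≤ 2` for every
state `ρ`. -/
theorem statement_16 {n : Type} [Fintype n] [DecidableEq n]
    (A₁ A₂ A₃ A₄ : Matrix n n ℂ)
    (h₁ : A₁.IsHermitian) (h₂ : A₂.IsHermitian) (h₃ : A₃.IsHermitian)
    (h₄ : A₄.IsHermitian)
    (hi₁ : A₁ * A₁ = 1) (hi₂ : A₂ * A₂ = 1) (hi₃ : A₃ * A₃ = 1) (hi₄ : A₄ * A₄ = 1)
    (c₁₂ : Commute A₁ A₂) (c₂₃ : Commute A₂ A₃) (c₃₄ : Commute A₃ A₄)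
    (c₄₁ : Commute A₄ A₁)
    (T : Matrix n n ℂ) (hT : T = A₁ * (A₂ + A₄) + A₃ * (A₂ - A₄)) :
    T * T = (4 : ℂ) • (1 : Matrix n n ℂ) -
        (A₁ * A₃ - A₃ * A₁) * (A₂ * A₄ - A₄ * A₂) ∧
    ‖Matrix.toEuclideanCLM (𝕜 := ℂ) T‖ ≤ 2 * Real.sqrt 2 ∧
    (∀ ρ : Matrix n n ℂ, IsDensityMatrix ρ → ((ρ * T).trace).re ≤ 2 * Real.sqrt 2) ∧
    ((A₁ * A₃ - A₃ * A₁) * (A₂ * A₄ - A₄ * A₂) = 0 →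
      T * T = (4 : ℂ) • (1 : Matrix n n ℂ) ∧
      spectrum ℂ T ⊆ {-2, 2} ∧
      ∀ ρ : Matrix n n ℂ, IsDensityMatrix ρ → ((ρ * T).trace).re ≤ 2) := by
  -- The companion operator: `T` with `A₁` and `A₃` exchanged.
  set S : Matrix n n ℂ := A₃ * (A₂ + A₄) + A₁ * (A₂ - A₄) with hS
  have hTT := chsh_sq hi₁ hi₂ hi₃ hi₄ c₁₂ c₂₃ c₃₄ c₄₁
  rw [← hT] at hTT
  have hSS := chsh_sq hi₃ hi₂ hi₁ hi₄ c₂₃.symm c₁₂.symm c₄₁.symm c₃₄.symm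
  rw [← hS] at hSS
  have hTh : T.IsHermitian := hT ▸ chsh_isHermitian h₁ h₂ h₃ h₄ c₁₂ c₂₃ c₃₄ c₄₁
  have hSh : S.IsHermitian :=
    chsh_isHermitian h₃ h₂ h₁ h₄ c₂₃.symm c₁₂.symm c₄₁.symm c₃₄.symm
  have hsum : T * T + S * S = (8 : ℂ) • (1 : Matrix n n ℂ) := by
    rw [hTT, hSS, ← neg_sub (A₁ * A₃) (A₃ * A₁), neg_mul]
    module
  have h8 : (2 * Real.sqrt 2) ^ 2 = 8 := by
    rw [mul_pow, Real.sq_sqrt (by norm_num)]; norm_num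
  refine ⟨hTT, ?_, fun ρ hρ => ?_, fun h0 => ?_⟩
  · refine norm_le_of_sq_add_sq hTh hSh (by positivity) ?_
    rw [h8, hsum]; norm_num
  · refine trace_mul_le_of_sq_add_sq hTh hSh (by positivity) ?_ hρ
    rw [h8, hsum]; norm_num
  · rw [h0, sub_zero] at hTT
    refine ⟨hTT, spectrum_subset_of_sq_eq_four hTT, fun ρ hρ => ?_⟩
    refine trace_mul_le_of_sq_add_sq (S := 0) hTh isHermitian_zero (by norm_num) ?_ hρ
    rw [hTT]; norm_num

end
end
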